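/- arXiv:1605.08131 — 2 statements merged into one kernel-verified Lean document; each statement's English description precedes it below -/
import Mathlib

section
/- Let p be a prime, let V and W be free modules over Z/p², and let φ : V → W be a Z/p²-linear map with induced map ψ : V/pV → W/pW. Then the map f from pW/φ(pV) to coker ψ = (W/pW)/ψ(V/pV) defined by f(pw + φ(pV)) = (w + pW) + ψ(V/pV) is a well-defined Z/p-linear isomorphism. -/
/-- The submodule `pV` of a `ℤ/p²`-module `V`, i.e. the image of multiplication by `p`. -/
def pSub (p : ℕ) (V : Type*) [AddCommGroup V] [Module (ZMod (p ^ 2)) V] :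
    Submodule (ZMod (p ^ 2)) V :=
  LinearMap.range ((p : ZMod (p ^ 2)) • (LinearMap.id : V →ₗ[ZMod (p ^ 2)] V))

lemma smul_mem_pSub (p : ℕ) (V : Type*) [AddCommGroup V] [Module (ZMod (p ^ 2)) V] (x : V) :
    (p : ZMod (p ^ 2)) • x ∈ pSub p V :=
  ⟨x, rfl⟩

/-- `V/pV` is a `ℤ/p`-vector space. -/
noncomputable instance quotModZMod (p : ℕ) [NeZero p] (V : Type*) [AddCommGroup V]
    [Module (ZMod (p ^ 2)) V] : Module (ZMod p) (V ⧸ pSub p V) :=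
  AddCommGroup.zmodModule (by
    intro x
    obtain ⟨v, rfl⟩ := Submodule.Quotient.mk_surjective _ x
    rw [← Nat.cast_smul_eq_nsmul (ZMod (p ^ 2)), ← Submodule.Quotient.mk_smul,
      Submodule.Quotient.mk_eq_zero]
    exact smul_mem_pSub p V v)

/-- The map `V/pV → W/pW` induced by a `ℤ/p²`-linear map `φ : V → W`, as a
`ℤ/p`-linear map. -/
noncomputable def inducedMap (p : ℕ) [NeZero p] {V W : Type*} [AddCommGroup V]
    [Module (ZMod (p ^ 2)) V] [AddCommGroup W] [Module (ZMod (p ^ 2)) W]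
    (φ : V →ₗ[ZMod (p ^ 2)] W) :
    (V ⧸ pSub p V) →ₗ[ZMod p] (W ⧸ pSub p W) :=
  ((Submodule.mapQ (pSub p V) (pSub p W) φ (by
      rintro x ⟨v, rfl⟩
      exact ⟨φ v, by simp⟩)).toAddMonoidHom).toZModLinearMap p

@[simp] lemma inducedMap_mk (p : ℕ) [NeZero p] {V W : Type*} [AddCommGroup V]
    [Module (ZMod (p ^ 2)) V] [AddCommGroup W] [Module (ZMod (p ^ 2)) W]
    (φ : V →ₗ[ZMod (p ^ 2)] W) (v : V) :
    inducedMap p φ (Submodule.Quotient.mk v) = Submodule.Quotient.mk (φ v) := rfl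

lemma p_smul_pSub (p : ℕ) (V : Type*) [AddCommGroup V] [Module (ZMod (p ^ 2)) V]
    (y : ↥(pSub p V)) : p • y = 0 := by
  obtain ⟨y, hy⟩ := y
  obtain ⟨x, rfl⟩ := hy
  ext
  show p • ((p : ZMod (p ^ 2)) • (LinearMap.id : V →ₗ[ZMod (p ^ 2)] V)) x = 0
  rw [← Nat.cast_smul_eq_nsmul (ZMod (p ^ 2))]
  simp only [LinearMap.smul_apply, LinearMap.id_coe, id_eq, smul_smul, ← sq,
    ← Nat.cast_pow, ZMod.natCast_self, zero_smul]

/-- Any quotient of `pW` is a `ℤ/p`-vector space. -/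
noncomputable instance pSubQuotModZMod (p : ℕ) [NeZero p] (W : Type*) [AddCommGroup W]
    [Module (ZMod (p ^ 2)) W] (N : Submodule (ZMod (p ^ 2)) ↥(pSub p W)) :
    Module (ZMod p) (↥(pSub p W) ⧸ N) :=
  AddCommGroup.zmodModule (by
    intro x
    obtain ⟨y, rfl⟩ := Submodule.Quotient.mk_surjective _ x
    have h : (p : ℕ) • (Submodule.Quotient.mk y : ↥(pSub p W) ⧸ N) =
        Submodule.Quotient.mk ((p : ℕ) • y) := (map_nsmul N.mkQ p y).symm
    rw [h, p_smul_pSub p W y, Submodule.Quotient.mk_zero])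

/-- In `ℤ/p²`, an element killed by `p` is a multiple of `p`. -/
lemma ZMod.eq_mul_val_div_of_mul_eq_zero {p : ℕ} (hp : 0 < p) {c : ZMod (p ^ 2)}
    (h : (p : ZMod (p ^ 2)) * c = 0) :
    (p : ZMod (p ^ 2)) * ((c.val / p : ℕ) : ZMod (p ^ 2)) = c := by
  have : NeZero (p ^ 2) := ⟨(pow_pos hp 2).ne'⟩
  have hdvd : p ∣ c.val := by
    rw [← ZMod.natCast_zmod_val c, ← Nat.cast_mul, ZMod.natCast_eq_zero_iff] at h
    exact Nat.dvd_of_mul_dvd_mul_left hp (by rwa [← sq])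
  rw [← Nat.cast_mul, Nat.mul_div_cancel' hdvd, ZMod.natCast_zmod_val]

/-- In a free `ℤ/p²`-module `W`, multiplication by `p` has kernel `pW`. -/
lemma smul_eq_zero_iff_mem_pSub {p : ℕ} (hp : 0 < p) {W : Type*} [AddCommGroup W]
    [Module (ZMod (p ^ 2)) W] [Module.Free (ZMod (p ^ 2)) W] {w : W} :
    (p : ZMod (p ^ 2)) • w = 0 ↔ w ∈ pSub p W := by
  constructor
  · intro h
    let b := Module.Free.chooseBasis (ZMod (p ^ 2)) W
    refine ⟨b.repr.symm ((b.repr w).mapRange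
      (fun c => ((c.val / p : ℕ) : ZMod (p ^ 2))) (by simp)), ?_⟩
    apply b.repr.injective
    ext i
    have hi : (p : ZMod (p ^ 2)) * b.repr w i = 0 := by
      simpa using congrArg (fun x => b.repr x i) h
    simpa using ZMod.eq_mul_val_div_of_mul_eq_zero hp hi
  · rintro ⟨x, rfl⟩
    simp only [LinearMap.smul_apply, LinearMap.id_coe, id_eq, smul_smul, ← sq,
      ← Nat.cast_pow, ZMod.natCast_self, zero_smul]

/-- `pw ∈ φ(pV)` if and only if the class of `w` in `W/pW` lies in the image of `V/pV`. -/
lemma smul_mem_map_pSub_iff {p : ℕ} [NeZero p] {V W : Type*} [AddCommGroup V]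
    [Module (ZMod (p ^ 2)) V] [AddCommGroup W] [Module (ZMod (p ^ 2)) W]
    [Module.Free (ZMod (p ^ 2)) W] (φ : V →ₗ[ZMod (p ^ 2)] W) (w : W) :
    (p : ZMod (p ^ 2)) • w ∈ Submodule.map φ (pSub p V) ↔
      (Submodule.Quotient.mk w : W ⧸ pSub p W) ∈ LinearMap.range (inducedMap p φ) := by
  have key (v : V) : φ ((p : ZMod (p ^ 2)) • v) = (p : ZMod (p ^ 2)) • w ↔
      inducedMap p φ (Submodule.Quotient.mk v) = Submodule.Quotient.mk w := by
    rw [inducedMap_mk, Submodule.Quotient.eq, ← smul_eq_zero_iff_mem_pSub (NeZero.pos p),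
      smul_sub, sub_eq_zero, map_smul]
  constructor
  · rintro ⟨_, ⟨v, rfl⟩, hv⟩
    exact ⟨_, (key v).1 hv⟩
  · rintro ⟨x, hx⟩
    obtain ⟨v, rfl⟩ := Submodule.Quotient.mk_surjective _ x
    exact ⟨_, smul_mem_pSub p V v, (key v).2 hx⟩

/-- Two surjective additive maps with the same kernel have isomorphic targets. -/
lemma exists_addEquiv_of_ker_eq {A B C : Type*} [AddCommGroup A] [AddCommGroup B]
    [AddCommGroup C] (f : A →+ B) (g : A →+ C) (hf : Function.Surjective f)
    (hg : Function.Surjective g) (h : f.ker = g.ker) : ∃ e : B ≃+ C, ∀ a, e (f a) = g a := by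
  refine ⟨(QuotientAddGroup.quotientKerEquivOfSurjective f hf).symm.trans
    ((QuotientAddGroup.quotientAddEquivOfEq h).trans
      (QuotientAddGroup.quotientKerEquivOfSurjective g hg)), fun a => ?_⟩
  have ha : (QuotientAddGroup.quotientKerEquivOfSurjective f hf).symm (f a) =
      QuotientAddGroup.mk a := by
    rw [AddEquiv.symm_apply_eq]
    rfl
  simp only [AddEquiv.trans_apply, ha]
  rfl

/-- For a `ℤ/p²`-linear map `φ : V → W` between free `ℤ/p²`-modules,
with induced map `ψ : V/pV → W/pW`, the map `pW/φ(pV) → coker ψ` sending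
`p•w + φ(pV)` to `(w + pW) + ψ(V/pV)` is a well-defined `ℤ/p`-linear isomorphism. -/
theorem pW_mod_phi_pV_iso_coker (p : ℕ) [Fact p.Prime] (V W : Type*)
    [AddCommGroup V] [Module (ZMod (p ^ 2)) V] [Module.Free (ZMod (p ^ 2)) V]
    [AddCommGroup W] [Module (ZMod (p ^ 2)) W] [Module.Free (ZMod (p ^ 2)) W]
    (φ : V →ₗ[ZMod (p ^ 2)] W) :
    ∃ f : (↥(pSub p W) ⧸ Submodule.comap (pSub p W).subtype
            (Submodule.map φ (pSub p V)))
        ≃ₗ[ZMod p] ((W ⧸ pSub p W) ⧸ LinearMap.range (inducedMap p φ)),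
      ∀ w : W,
        f (Submodule.Quotient.mk ⟨(p : ZMod (p ^ 2)) • w, smul_mem_pSub p W w⟩) =
          Submodule.Quotient.mk (Submodule.Quotient.mk w) := by
  let N := Submodule.comap (pSub p W).subtype (Submodule.map φ (pSub p V))
  let R := LinearMap.range (inducedMap p φ)
  let a : W →+ ↥(pSub p W) ⧸ N := (N.mkQ.comp (LinearMap.rangeRestrict
    ((p : ZMod (p ^ 2)) • (LinearMap.id : W →ₗ[ZMod (p ^ 2)] W)))).toAddMonoidHom
  let b : W →+ (W ⧸ pSub p W) ⧸ R :=
    R.mkQ.toAddMonoidHom.comp (pSub p W).mkQ.toAddMonoidHom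
  have ha : Function.Surjective a :=
    N.mkQ_surjective.comp (LinearMap.surjective_rangeRestrict _)
  have hb : Function.Surjective b := R.mkQ_surjective.comp (pSub p W).mkQ_surjective
  have hker : a.ker = b.ker := by
    ext w
    exact (Submodule.Quotient.mk_eq_zero N).trans
      ((smul_mem_map_pSub_iff φ w).trans (Submodule.Quotient.mk_eq_zero R).symm)
  obtain ⟨e, he⟩ := exists_addEquiv_of_ker_eq a b ha hb hker
  exact ⟨{ e with map_smul' := ZMod.map_smul e.toAddMonoidHom }, he⟩
end

section
/- Let p be a prime, let V and W be free modules over Z/p², and let ψ : V/pV → W/pW be a Z/p-linear map. Then the map Γ sending each Z/p²-linear map φ : V → W with induced map ψ to its Bockstein homomorphism β_φ ∈ Hom(ker ψ, coker ψ) is surjective: for every Z/p-linear map β : ker ψ → coker ψ, there exists a Z/p²-linear map φ : V → W whose induced map on reductions modulo p is ψ and whose Bockstein homomorphism equals β. -/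
/-- `β : ker ψ → coker ψ` is *the* Bockstein homomorphism of a map `φ : V → W`
inducing `ψ` when, for every `v ∈ V` reducing into `ker ψ` and every `w` with
`φ v = p • w`, one has `β v̄ = (w + pW) + ψ(V/pV)`. -/
def IsBockstein (p : ℕ) [NeZero p] {V W : Type*} [AddCommGroup V]
    [Module (ZMod (p ^ 2)) V] [AddCommGroup W] [Module (ZMod (p ^ 2)) W]
    (ψ : (V ⧸ pSub p V) →ₗ[ZMod p] (W ⧸ pSub p W)) (φ : V →ₗ[ZMod (p ^ 2)] W)
    (β : ↥(LinearMap.ker ψ) →ₗ[ZMod p] ((W ⧸ pSub p W) ⧸ LinearMap.range ψ)) : Prop :=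
  ∀ (v : V) (hv : Submodule.Quotient.mk v ∈ LinearMap.ker ψ) (w : W),
    φ v = (p : ZMod (p ^ 2)) • w →
    β ⟨Submodule.Quotient.mk v, hv⟩ = Submodule.Quotient.mk (Submodule.Quotient.mk w)

/-- In `ℤ/p²`, the annihilator of `p` is generated by `p`. -/
lemma ZMod.natCast_dvd_of_mul_eq_zero {p : ℕ} [NeZero p] {c : ZMod (p ^ 2)}
    (h : (p : ZMod (p ^ 2)) * c = 0) : ∃ d : ZMod (p ^ 2), c = (p : ZMod (p ^ 2)) * d := by
  have hp : 0 < p := Nat.pos_of_ne_zero (NeZero.ne p)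
  rw [← ZMod.natCast_zmod_val c, ← Nat.cast_mul, ZMod.natCast_eq_zero_iff] at h
  obtain ⟨k, hk⟩ : p ∣ c.val :=
    Nat.dvd_of_mul_dvd_mul_left hp ((dvd_of_eq (sq p).symm).trans h)
  refine ⟨k, ?_⟩
  rw [← ZMod.natCast_zmod_val c, hk, Nat.cast_mul]

/-- In a free `ℤ/p²`-module `W`, the `p`-torsion is contained in `pW`. -/
lemma mem_pSub_of_smul_eq_zero {p : ℕ} [NeZero p] {W : Type*} [AddCommGroup W]
    [Module (ZMod (p ^ 2)) W] [Module.Free (ZMod (p ^ 2)) W] {w : W}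
    (h : (p : ZMod (p ^ 2)) • w = 0) : w ∈ pSub p W := by
  let b := Module.Free.chooseBasis (ZMod (p ^ 2)) W
  rw [← b.linearCombination_repr w, Finsupp.linearCombination_apply]
  refine Submodule.sum_mem _ fun i _ => ?_
  have hi : (p : ZMod (p ^ 2)) * b.repr w i = 0 := by
    simpa using congrArg (fun x => b.repr x i) h
  obtain ⟨d, hd⟩ := ZMod.natCast_dvd_of_mul_eq_zero hi
  beta_reduce
  rw [hd, mul_smul]
  exact smul_mem_pSub p W _

/-- Every `ℤ/p`-linear map `V/pV → W/pW` lifts to a linear map `V → W` when `V` is projective. -/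
lemma exists_inducedMap_eq {p : ℕ} [NeZero p] {V W : Type*} [AddCommGroup V]
    [Module (ZMod (p ^ 2)) V] [Module.Projective (ZMod (p ^ 2)) V] [AddCommGroup W]
    [Module (ZMod (p ^ 2)) W] (f : (V ⧸ pSub p V) →ₗ[ZMod p] (W ⧸ pSub p W)) :
    ∃ φ : V →ₗ[ZMod (p ^ 2)] W, inducedMap p φ = f := by
  obtain ⟨φ, hφ⟩ := Module.projective_lifting_property (pSub p W).mkQ
    ((f.toAddMonoidHom.toZModLinearMap (p ^ 2)).comp (pSub p V).mkQ) (pSub p W).mkQ_surjective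
  refine ⟨φ, LinearMap.ext fun x => ?_⟩
  obtain ⟨v, rfl⟩ := Submodule.Quotient.mk_surjective _ x
  exact LinearMap.congr_fun hφ v

/-- Every `ℤ/p`-linear map `β : ker ψ → coker ψ` is the Bockstein
homomorphism of some `ℤ/p²`-linear map `φ : V → W` whose reduction mod `p` is `ψ`. -/
theorem bockstein_surjective (p : ℕ) [Fact p.Prime] (V W : Type*)
    [AddCommGroup V] [Module (ZMod (p ^ 2)) V] [Module.Free (ZMod (p ^ 2)) V]
    [AddCommGroup W] [Module (ZMod (p ^ 2)) W] [Module.Free (ZMod (p ^ 2)) W]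
    (ψ : (V ⧸ pSub p V) →ₗ[ZMod p] (W ⧸ pSub p W))
    (β : ↥(LinearMap.ker ψ) →ₗ[ZMod p] ((W ⧸ pSub p W) ⧸ LinearMap.range ψ)) :
    ∃ φ : V →ₗ[ZMod (p ^ 2)] W, inducedMap p φ = ψ ∧ IsBockstein p ψ φ β := by
  obtain ⟨r, hr⟩ := (LinearMap.ker ψ).subtype.exists_leftInverse_of_injective
    (LinearMap.ker ψ).ker_subtype
  obtain ⟨θ, hθ⟩ := Module.projective_lifting_property (LinearMap.range ψ).mkQ β
    (LinearMap.range ψ).mkQ_surjective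
  obtain ⟨φ₀, hφ₀⟩ := exists_inducedMap_eq ψ
  obtain ⟨π, hπ⟩ := exists_inducedMap_eq
    (LinearMap.id - (LinearMap.ker ψ).subtype ∘ₗ r)
  obtain ⟨χ, hχ⟩ := exists_inducedMap_eq (θ ∘ₗ r)
  have mk_φ₀ (v : V) : (Submodule.Quotient.mk (φ₀ v) : W ⧸ pSub p W) =
      ψ (Submodule.Quotient.mk v) := by rw [← hφ₀, inducedMap_mk]
  have mk_π (v : V) : (Submodule.Quotient.mk (π v) : V ⧸ pSub p V) =
      (Submodule.Quotient.mk v : V ⧸ pSub p V) - r (Submodule.Quotient.mk v) := by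
    rw [← inducedMap_mk p π, hπ]; rfl
  have mk_χ (v : V) : (Submodule.Quotient.mk (χ v) : W ⧸ pSub p W) =
      θ (r (Submodule.Quotient.mk v)) := by rw [← inducedMap_mk p χ, hχ]; rfl
  refine ⟨φ₀ ∘ₗ π + (p : ZMod (p ^ 2)) • χ, LinearMap.ext fun x => ?_, fun v hv w hw => ?_⟩
  · obtain ⟨v, rfl⟩ := Submodule.Quotient.mk_surjective _ x
    rw [inducedMap_mk, LinearMap.add_apply, Submodule.Quotient.mk_add, LinearMap.comp_apply,
      LinearMap.smul_apply, (Submodule.Quotient.mk_eq_zero _).2 (smul_mem_pSub p W (χ v)),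
      add_zero, mk_φ₀, mk_π, map_sub, LinearMap.mem_ker.1 (r _).2, sub_zero]
  · have r_v : r (Submodule.Quotient.mk v) = ⟨Submodule.Quotient.mk v, hv⟩ :=
      LinearMap.congr_fun hr ⟨Submodule.Quotient.mk v, hv⟩
    obtain ⟨u, hu⟩ : π v ∈ pSub p V := by
      rw [← Submodule.Quotient.mk_eq_zero, mk_π, r_v, sub_self]
    replace hu : (p : ZMod (p ^ 2)) • u = π v := hu
    have hmem : w - (φ₀ u + χ v) ∈ pSub p W := by
      apply mem_pSub_of_smul_eq_zero
      rw [smul_sub, ← hw, smul_add, ← map_smul, hu]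
      exact sub_self _
    have mk_w : (Submodule.Quotient.mk w : W ⧸ pSub p W) =
        ψ (Submodule.Quotient.mk u) + θ ⟨Submodule.Quotient.mk v, hv⟩ := by
      rw [(Submodule.Quotient.eq _).2 hmem, Submodule.Quotient.mk_add, mk_φ₀, mk_χ, r_v]
    rw [mk_w, Submodule.Quotient.mk_add,
      (Submodule.Quotient.mk_eq_zero _).2 (LinearMap.mem_range_self ψ _), zero_add, ← hθ]
    rfl
end
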